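/- arXiv:1611.06560 — 2 statements merged into one kernel-verified Lean document; each statement's English description precedes it below -/
import Mathlib

section
/- For every z in the disk |z| < δ_A/‖B‖, where A ∈ V_{[a,b]}(X) and B is a nonzero bounded linear operator on X, the operator-valued function z ↦ f(A + z·B) is differentiable (in operator norm) and its derivative is d/dz f(A + z·B) = ∫_a^b R(t, A + z·B)·B·R(t, A + z·B)·t dτ(t). -/
open MeasureTheory Set Filter

/-- A bounded operator `A` belongs to `V_{[a,b]}(X)` if `[a,b]` lies in its resolvent set. -/
def MemVab {X : Type*} [NormedAddCommGroup X] [NormedSpace ℂ X]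
    (a b : ℝ) (A : X →L[ℂ] X) : Prop :=
  ∀ t ∈ Icc a b, (t : ℂ) ∈ resolventSet ℂ A

/-- `m_A = max_{t ∈ [a,b]} ‖R(t,A)‖`. -/
noncomputable def mConst {X : Type*} [NormedAddCommGroup X] [NormedSpace ℂ X]
    (a b : ℝ) (A : X →L[ℂ] X) : ℝ :=
  sSup ((fun t : ℝ => ‖resolvent A (t : ℂ)‖) '' Icc a b)

/-- For `f ∈ ZR[a,b]` with representing measure `τ`, the operator
`f(A) = ∫_a^b A·R(t,A) dτ(t)` (a Bochner integral in operator norm). -/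
noncomputable def fOp {X : Type*} [NormedAddCommGroup X] [NormedSpace ℂ X] [CompleteSpace X]
    (τ : Measure ℝ) (a b : ℝ) (A : X →L[ℂ] X) : X →L[ℂ] X :=
  ∫ t in Icc a b, A * resolvent A (t : ℂ) ∂τ

/-- The transformer `f^∇_A(B) = ∫_a^b R(t,A)·B·R(t,A)·t dτ(t)`. -/
noncomputable def fDer {X : Type*} [NormedAddCommGroup X] [NormedSpace ℂ X] [CompleteSpace X]
    (τ : Measure ℝ) (a b : ℝ) (A B : X →L[ℂ] X) : X →L[ℂ] X :=
  ∫ t in Icc a b, t • (resolvent A (t : ℂ) * B * resolvent A (t : ℂ)) ∂τ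

theorem aux_contAt {X : Type*} [NormedAddCommGroup X] [NormedSpace ℂ X]
    [CompleteSpace X] (A B : X →L[ℂ] X) (w : ℂ) (t : ℝ)
    (h : (t : ℂ) ∈ resolventSet ℂ (A + w • B)) :
    ContinuousAt (fun p : ℂ × ℝ => resolvent (A + p.1 • B) (p.2 : ℂ)) (w, t) := by
  obtain ⟨u, hu⟩ := h
  have h1 := NormedRing.inverse_continuousAt u
  rw [hu] at h1
  have h2 : Continuous (fun p : ℂ × ℝ =>
      algebraMap ℂ (X →L[ℂ] X) (p.2 : ℂ) - (A + p.1 • B)) := by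
    simp only [Algebra.algebraMap_eq_smul_one]
    fun_prop
  exact ContinuousAt.comp (f := fun p : ℂ × ℝ =>
      algebraMap ℂ (X →L[ℂ] X) (p.2 : ℂ) - (A + p.1 • B)) (x := (w, t)) h1 h2.continuousAt

theorem aux_deriv {X : Type*} [NormedAddCommGroup X] [NormedSpace ℂ X]
    [CompleteSpace X] (A B : X →L[ℂ] X) (w : ℂ) (t : ℝ)
    (h : (t : ℂ) ∈ resolventSet ℂ (A + w • B)) :
    HasDerivAt (fun w : ℂ => (A + w • B) * resolvent (A + w • B) (t : ℂ))
      (t • (resolvent (A + w • B) (t : ℂ) * B * resolvent (A + w • B) (t : ℂ))) w := by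
  have hr := spectrum.resolvent_eq h
  have hmul : (algebraMap ℂ (X →L[ℂ] X) (t : ℂ) - (A + w • B)) * resolvent (A + w • B) (t : ℂ) = 1 :=
    Ring.mul_inverse_cancel _ h
  have d1 : HasDerivAt (fun w : ℂ => A + w • B) B w := by
    simpa using ((hasDerivAt_id w).smul_const B).const_add A
  have d2 : HasDerivAt (fun w : ℂ => algebraMap ℂ (X →L[ℂ] X) (t : ℂ) - (A + w • B)) (-B) w :=
    d1.const_sub _
  obtain ⟨u, hu⟩ := h
  have h3 := hasFDerivAt_ringInverse (𝕜 := ℂ) u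
  have hres : (↑u⁻¹ : X →L[ℂ] X) = resolvent (A + w • B) (t : ℂ) := by
    rw [resolvent, ← hu, Ring.inverse_unit]
  rw [hu, hres] at h3
  have d3 : HasDerivAt (fun w : ℂ => resolvent (A + w • B) (t : ℂ))
      (resolvent (A + w • B) (t : ℂ) * B * resolvent (A + w • B) (t : ℂ)) w := by
    have := h3.comp_hasDerivAt w d2
    simpa [Function.comp_def, resolvent] using this
  have d4 := d1.mul d3
  suffices hs : t • (resolvent (A + w • B) (t : ℂ) * B * resolvent (A + w • B) (t : ℂ)) =
      B * resolvent (A + w • B) (t : ℂ) + (A + w • B) *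
        (resolvent (A + w • B) (t : ℂ) * B * resolvent (A + w • B) (t : ℂ)) by
    rw [hs]; exact d4
  generalize resolvent (A + w • B) (t : ℂ) = R at *
  rw [sub_mul, sub_eq_iff_eq_add] at hmul
  have e : (A + w • B) * (R * B * R) = ((A + w • B) * R) * (B * R) := by simp only [mul_assoc]
  have e2 : (A + w • B) * R = (t : ℂ) • R - 1 := by
    rw [Algebra.algebraMap_eq_smul_one, smul_mul_assoc, one_mul] at hmul
    rw [hmul]; abel
  rw [e, e2, sub_mul, one_mul, smul_mul_assoc, mul_assoc]
  rw [add_sub_cancel]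
  rfl

/-- Formula (13): for `|z| < δ_A/‖B‖` the operator-valued function `z ↦ f(A + zB)` is
differentiable in operator norm, with derivative
`∫_a^b R(t,A+zB)·B·R(t,A+zB)·t dτ(t)`. -/
theorem fOp_hasDerivAt {X : Type*} [NormedAddCommGroup X] [NormedSpace ℂ X]
    [CompleteSpace X] (a b : ℝ) (hab : a < b) (τ : Measure ℝ) [IsFiniteMeasure τ]
    (A B : X →L[ℂ] X) (hA : MemVab a b A) (hB : B ≠ 0)
    (z : ℂ) (hz : ‖z‖ < (1 / mConst a b A) / ‖B‖) :
    HasDerivAt (fun w : ℂ => fOp τ a b (A + w • B))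
      (∫ t in Icc a b,
        t • (resolvent (A + z • B) (t : ℂ) * B * resolvent (A + z • B) (t : ℂ)) ∂τ) z := by
  have hBpos : 0 < ‖B‖ := norm_pos_iff.mpr hB
  have hcont0 : ∀ t ∈ Icc a b, ContinuousAt (fun s : ℝ => resolvent A (s : ℂ)) t := by
    intro t ht
    have h := aux_contAt A B 0 t (by simpa using hA t ht)
    have := ContinuousAt.comp (f := fun s : ℝ => ((0 : ℂ), s)) (x := t) h (by fun_prop)
    simpa [Function.comp_def] using this
  have hbdd : BddAbove ((fun t : ℝ => ‖resolvent A (t : ℂ)‖) '' Icc a b) :=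
    isCompact_Icc.bddAbove_image fun t ht => (hcont0 t ht).norm.continuousWithinAt
  have hle : ∀ t ∈ Icc a b, ‖resolvent A (t : ℂ)‖ ≤ mConst a b A := fun t ht =>
    le_csSup hbdd ⟨t, ht, rfl⟩
  have hmem : ∀ w : ℂ, ‖w‖ < (1 / mConst a b A) / ‖B‖ → ∀ t ∈ Icc a b,
      (t : ℂ) ∈ resolventSet ℂ (A + w • B) := by
    intro w hw t ht
    obtain ⟨u, hu⟩ := hA t ht
    have hres : (↑u⁻¹ : X →L[ℂ] X) = resolvent A (t : ℂ) := by
      rw [resolvent, ← hu, Ring.inverse_unit]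
    have : Nontrivial (X →L[ℂ] X) := ⟨B, 0, hB⟩
    have hpos : 0 < ‖(↑u⁻¹ : X →L[ℂ] X)‖ := Units.norm_pos _
    have hlt : ‖(algebraMap ℂ (X →L[ℂ] X) (t : ℂ) - (A + w • B)) - u‖
        < ‖(↑u⁻¹ : X →L[ℂ] X)‖⁻¹ := by
      have e : (algebraMap ℂ (X →L[ℂ] X) (t : ℂ) - (A + w • B)) - u = -(w • B) := by
        rw [hu]; abel
      rw [e, norm_neg, norm_smul]
      rw [lt_div_iff₀ hBpos, one_div] at hw
      refine hw.trans_le (inv_anti₀ hpos ?_)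
      rw [hres]; exact hle t ht
    exact ⟨Units.ofNearby u _ hlt, rfl⟩
  obtain ⟨r, hr1, hr2⟩ := exists_between hz
  set F' : ℂ → ℝ → (X →L[ℂ] X) := fun w t =>
    t • (resolvent (A + w • B) (t : ℂ) * B * resolvent (A + w • B) (t : ℂ)) with hF'
  have hF'c : ContinuousOn (fun p : ℂ × ℝ => F' p.1 p.2) (Metric.closedBall 0 r ×ˢ Icc a b) := by
    rintro ⟨w, t⟩ ⟨hw, ht⟩
    have hw' : ‖w‖ ≤ r := by simpa using hw
    have h := aux_contAt A B w t (hmem w (hw'.trans_lt hr2) t ht)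
    exact (continuousAt_snd.smul ((h.mul continuousAt_const).mul h)).continuousWithinAt
  obtain ⟨C, hC⟩ := ((isCompact_closedBall (0 : ℂ) r).prod
    (isCompact_Icc (a := a) (b := b))).exists_bound_of_continuousOn hF'c
  have hFc : ∀ w : ℂ, ‖w‖ < r → ContinuousOn
      (fun t : ℝ => (A + w • B) * resolvent (A + w • B) (t : ℂ)) (Icc a b) := by
    intro w hw t ht
    have h := aux_contAt A B w t (hmem w (hw.trans hr2) t ht)
    have h2 := ContinuousAt.comp (f := fun s : ℝ => (w, s)) (x := t) h (by fun_prop)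
    exact (continuousAt_const.mul h2).continuousWithinAt
  have hball : Metric.ball (0 : ℂ) r ∈ nhds z :=
    Metric.isOpen_ball.mem_nhds (by simpa using hr1)
  refine (hasDerivAt_integral_of_dominated_loc_of_deriv_le (μ := τ.restrict (Icc a b))
    (F := fun w t => (A + w • B) * resolvent (A + w • B) (t : ℂ)) (F' := F')
    (bound := fun _ => C) hball ?_ ?_ ?_ ?_ ?_ ?_).2
  · filter_upwards [hball] with w hw
    exact (hFc w (by simpa using hw)).aestronglyMeasurable_of_isCompact isCompact_Icc
      measurableSet_Icc
  · exact (hFc z hr1).integrableOn_compact isCompact_Icc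
  · refine ContinuousOn.aestronglyMeasurable_of_isCompact ?_ isCompact_Icc measurableSet_Icc
    exact hF'c.comp (f := fun t : ℝ => (z, t)) (by fun_prop)
      (fun t ht => ⟨by simpa using hr1.le, ht⟩)
  · filter_upwards [ae_restrict_mem measurableSet_Icc] with t ht w hw
    exact hC (w, t) ⟨Metric.ball_subset_closedBall hw, ht⟩
  · exact integrable_const _
  · filter_upwards [ae_restrict_mem measurableSet_Icc] with t ht w hw
    exact aux_deriv A B w t (hmem w ((by simpa using hw : ‖w‖ < r).trans hr2) t ht)
end

section
/- (Trace identity.) Let X be a finite-dimensional complex normed space and let A, B be linear operators on X such that [a,b] is contained in the resolvent set of A and in the resolvent set of B. Then tr(f(A) − f(B)) = ∫_a^b tr(R(t,A)·(A−B)·R(t,B))·t dτ(t), where tr denotes the trace of a linear operator on X. -/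
open MeasureTheory Set

/-- Trace identity: on a finite-dimensional complex normed space, if `[a,b] ⊂ ρ(A) ∩ ρ(B)`,
then `tr(f(A) − f(B)) = ∫_a^b tr(R(t,A)·(A−B)·R(t,B))·t dτ(t)`. -/
theorem trace_fOp_sub_fOp {X : Type*} [NormedAddCommGroup X] [NormedSpace ℂ X]
    [FiniteDimensional ℂ X] (a b : ℝ) (hab : a < b) (τ : Measure ℝ) [IsFiniteMeasure τ]
    (A B : X →L[ℂ] X)
    (hA : ∀ t ∈ Icc a b, (t : ℂ) ∈ resolventSet ℂ A)
    (hB : ∀ t ∈ Icc a b, (t : ℂ) ∈ resolventSet ℂ B) :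
    LinearMap.trace ℂ X ((fOp τ a b A - fOp τ a b B) : X →ₗ[ℂ] X) =
      ∫ t in Icc a b,
        (t : ℂ) *
          LinearMap.trace ℂ X
            ((resolvent A (t : ℂ) * (A - B) * resolvent B (t : ℂ)) : X →ₗ[ℂ] X) ∂τ := by
  have hint : ∀ (C : X →L[ℂ] X), (∀ t ∈ Icc a b, (t : ℂ) ∈ resolventSet ℂ C) →
      Integrable (fun t : ℝ => C * resolvent C (t : ℂ)) (τ.restrict (Icc a b)) := by
    intro C hC
    have hc : ContinuousOn (fun t : ℝ => C * resolvent C (t : ℂ)) (Icc a b) := by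
      intro t ht
      have h1 : ContinuousAt (fun z : ℂ => resolvent C z) (t : ℂ) :=
        (spectrum.hasDerivAt_resolvent_const_left (hC t ht)).continuousAt
      have h2 : ContinuousAt (fun t : ℝ => resolvent C (t : ℂ)) t :=
        ContinuousAt.comp (f := fun t : ℝ => (t : ℂ)) (g := fun z : ℂ => resolvent C z) h1
          Complex.continuous_ofReal.continuousAt
      exact (continuousAt_const.mul h2).continuousWithinAt
    exact hc.integrableOn_compact isCompact_Icc
  let T : (X →L[ℂ] X) →L[ℂ] ℂ := LinearMap.toContinuousLinearMap
    ((LinearMap.trace ℂ X).comp (ContinuousLinearMap.coeLM ℂ))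
  have hT : ∀ C : X →L[ℂ] X, T C = LinearMap.trace ℂ X (C : X →ₗ[ℂ] X) := fun _ => rfl
  have hsub : LinearMap.trace ℂ X ((fOp τ a b A - fOp τ a b B) : X →ₗ[ℂ] X)
      = T (fOp τ a b A - fOp τ a b B) := rfl
  rw [hsub, fOp, fOp, ← integral_sub (hint A hA) (hint B hB)]
  refine (T.integral_comp_comm ((hint A hA).sub (hint B hB))).symm.trans ?_
  refine setIntegral_congr_fun measurableSet_Icc ?_
  intro t ht
  have key : A * resolvent A (t : ℂ) - B * resolvent B (t : ℂ)
      = (t : ℂ) • (resolvent A (t : ℂ) * (A - B) * resolvent B (t : ℂ)) := by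
    set k : X →L[ℂ] X := algebraMap ℂ (X →L[ℂ] X) (t : ℂ) with hk
    have a1 : (k - A) * resolvent A (t : ℂ) = 1 := Ring.mul_inverse_cancel _ (hA t ht)
    have a2 : resolvent A (t : ℂ) * (k - A) = 1 := Ring.inverse_mul_cancel _ (hA t ht)
    have b1 : (k - B) * resolvent B (t : ℂ) = 1 := Ring.mul_inverse_cancel _ (hB t ht)
    generalize resolvent A (t : ℂ) = R at *
    generalize resolvent B (t : ℂ) = S at *
    have e1 : R * (A - B) * S = R - S := by
      calc R * (A - B) * S = R * ((k - B) * S) - (R * (k - A)) * S := by noncomm_ring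
        _ = R - S := by rw [a2, b1]; simp
    have e2 : A * R = k * R - 1 := by rw [← a1]; noncomm_ring
    have e3 : B * S = k * S - 1 := by rw [← b1]; noncomm_ring
    rw [e1, e2, e3, Algebra.smul_def, ← hk]
    noncomm_ring
  change T (A * resolvent A (t : ℂ) - B * resolvent B (t : ℂ)) =
    (t : ℂ) * T (resolvent A (t : ℂ) * (A - B) * resolvent B (t : ℂ))
  rw [key, map_smul, smul_eq_mul]
end
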